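/- Let γ = −8. There exists a constant C > 0 such that |G(x,t)| ≤ C (1+|t|)^{−1/2} log(2+|t|) for all x ∈ ℤ² and all t ∈ ℝ. -/

import Mathlib

open MeasureTheory

/-- `ω(ξ) = sqrt((2 − 2cos ξ₁) + (2 − 2cos ξ₂))`. -/
noncomputable def om (ξ : ℝ × ℝ) : ℝ :=
  Real.sqrt ((2 - 2 * Real.cos ξ.1) + (2 - 2 * Real.cos ξ.2))

/-- The fundamental solution of the discrete fourth-order Schrödinger equation
`i∂ₜu + Δ²u − γΔu = 0` on the lattice `ℤ²`. -/
noncomputable def G2 (γ : ℝ) (x : ℤ × ℤ) (t : ℝ) : ℂ :=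
  ((((2 * Real.pi) ^ 2)⁻¹ : ℝ) : ℂ) *
    ∫ ξ in Set.Icc (-Real.pi) Real.pi ×ˢ Set.Icc (-Real.pi) Real.pi,
      Complex.exp (Complex.I *
        (((x.1 : ℝ) * ξ.1 + (x.2 : ℝ) * ξ.2 + (om ξ ^ 4 + γ * om ξ ^ 2) * t : ℝ) : ℂ))

/- Since `ω⁴ - 8ω² = 4 (cos ξ₁ + cos ξ₂)² - 16`, the rotation `(ξ₁, ξ₂) = (a + b, a - b)` turns the
phase into `m a + n b + 16 t cos² a cos² b` with `m = x₁ + x₂` and `n = x₁ - x₂`, and so bounds `G`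
by the integral over `a` of `|F(cos² a)|`, where
`F(c) = ∫ exp(i (n b + T c cos² b)) db` and `T = 16 t`.
Averaging `|F(c)|²` against a Gaussian in `c` yields the positive kernel
`exp(-(T (cos² b - cos² a) / 2)²)`, in which `n` no longer appears. Schur's test with the weight
`w(a) = |sin 2a| + 1 / (1 + |T|)` bounds its double integral by a multiple of
`(1 + |T|)⁻¹ ∫ 1 / w`, and `∫ 1 / w = O(log (2 + |T|))` is the source of the logarithm. Passing
from this to the `L¹` norm of `F(cos² a)` by Cauchy–Schwarz with the same weight costs the square
root. -/

section PeriodicIntegrals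

open Set

variable {E : Type*} [NormedAddCommGroup E] [NormedSpace ℝ E]

lemma intervalIntegral_eq_two_mul_nsmul_of_even_of_periodic {h : ℝ → E} {τ : ℝ}
    (heven : h.Even) (hper : h.Periodic (2 * τ))
    (hint : ∀ a b, IntervalIntegrable h volume a b) (n : ℕ) :
    ∫ x in -(n * τ)..n * τ, h x = (2 * n) • ∫ x in 0..τ, h x := by
  have hhalf : ∫ x in -τ..0, h x = ∫ x in 0..τ, h x := by
    simpa only [heven _, neg_neg, neg_zero] using
      (intervalIntegral.integral_comp_neg (a := 0) (b := τ) h).symm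
  have hperiod : ∫ x in -τ..-τ + 2 * τ, h x = 2 • ∫ x in 0..τ, h x := by
    rw [two_mul, neg_add_cancel_left, two_nsmul,
      ← intervalIntegral.integral_add_adjacent_intervals (hint (-τ) 0) (hint 0 τ), hhalf]
  have hperiods := hper.intervalIntegral_add_zsmul_eq n (-(n * τ)) hint
  rw [hper.intervalIntegral_add_eq _ (-τ), hperiod, natCast_zsmul, natCast_zsmul, smul_smul,
    mul_comm n, nsmul_eq_mul] at hperiods
  rw [← hperiods]
  congr 1
  ring

lemma intervalIntegral_swap_of_continuous {f : ℝ → ℝ → E} (hf : Continuous f.uncurry)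
    (a b c d : ℝ) :
    ∫ x in a..b, ∫ y in c..d, f x y = ∫ y in c..d, ∫ x in a..b, f x y :=
  intervalIntegral_intervalIntegral_swap <|
    (hf.continuousOn.integrableOn_compact (isCompact_uIcc.prod isCompact_uIcc)).mono_set
      (prod_mono uIoc_subset_uIcc uIoc_subset_uIcc)

lemma intervalIntegral_comp_add_right_of_periodic {f : ℝ → E} {τ : ℝ} (hf : f.Periodic τ)
    (s d : ℝ) : ∫ x in s..s + τ, f (x + d) = ∫ x in s..s + τ, f x := by
  rw [intervalIntegral.integral_comp_add_right, add_right_comm]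
  exact hf.intervalIntegral_add_eq _ _

lemma intervalIntegral_comp_two_mul_of_periodic {f : ℝ → E} {τ : ℝ} (hf : f.Periodic τ)
    (hint : ∀ a b, IntervalIntegrable f volume a b) (s : ℝ) :
    ∫ x in s..s + τ, f (2 * x) = ∫ x in s..s + τ, f x := by
  have h := hf.intervalIntegral_add_zsmul_eq 2 (2 * s) hint
  rw [hf.intervalIntegral_add_eq _ s, zsmul_eq_mul, Int.cast_ofNat, ← mul_add] at h
  rw [intervalIntegral.integral_comp_mul_left f two_ne_zero, h, ofNat_zsmul,
    ← Nat.cast_smul_eq_nsmul ℝ, smul_smul]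
  norm_num

/- The map `(a, b) ↦ (a + b, a - b)` is two-to-one on the torus and doubles areas: it is the
composite of the shear `b ↦ b - a`, the doubling of `a`, and another shear. -/
lemma intervalIntegral_comp_add_sub_of_periodic {f : ℝ → ℝ → E} {τ : ℝ}
    (hf : Continuous f.uncurry) (hper₁ : ∀ v, (f · v).Periodic τ) (hper₂ : ∀ u, (f u).Periodic τ)
    (s : ℝ) :
    ∫ a in s..s + τ, ∫ b in s..s + τ, f (a + b) (a - b)
      = ∫ u in s..s + τ, ∫ v in s..s + τ, f u v := by
  have hanti (a : ℝ) : Function.Periodic (fun b ↦ f (a + b) (a - b)) τ := fun b ↦ by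
    simp only [← add_assoc, ← sub_sub]
    exact (hper₁ _ (a + b)).trans ((hper₂ (a + b)).sub_eq (a - b))
  calc ∫ a in s..s + τ, ∫ b in s..s + τ, f (a + b) (a - b)
    _ = ∫ a in s..s + τ, ∫ b in s..s + τ, f b (2 * a + -b) := by
      congr! 2 with a
      rw [← intervalIntegral_comp_add_right_of_periodic (hanti a) s (-a)]
      congr! 3 <;> ring
    _ = ∫ b in s..s + τ, ∫ a in s..s + τ, f b (2 * a + -b) :=
      intervalIntegral_swap_of_continuous (f := fun a b ↦ f b (2 * a + -b)) (by fun_prop) ..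
    _ = ∫ u in s..s + τ, ∫ v in s..s + τ, f u v := by
      congr! 2 with u
      have hc : Continuous (f u) := by fun_prop
      rw [intervalIntegral_comp_two_mul_of_periodic (f := fun v ↦ f u (v + -u))
        ((hper₂ u).add_const (-u)) (fun _ _ ↦ Continuous.intervalIntegrable (by fun_prop) _ _),
        intervalIntegral_comp_add_right_of_periodic (hper₂ u)]

end PeriodicIntegrals

section GeneralBounds

open Real

variable {α : Type*} [MeasurableSpace α] {μ : Measure α}

lemma norm_integral_exp_neg_sq_mul_cexp (s : ℝ) :
    ‖∫ c : ℝ, (rexp (-c ^ 2) : ℂ) * Complex.exp ((c * s : ℝ) * Complex.I)‖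
      = √π * rexp (-(s / 2) ^ 2) := by
  have hfourier := fourierIntegral_gaussian (b := 1) (by simp) s
  have hint : ∫ c : ℝ, (rexp (-c ^ 2) : ℂ) * Complex.exp ((c * s : ℝ) * Complex.I)
      = √π * rexp (-(s / 2) ^ 2) := by
    rw [sqrt_eq_rpow, Complex.ofReal_cpow pi_pos.le]
    convert hfourier using 2
    · ext c
      push_cast
      ring_nf
    · simp
    · push_cast
      ring_nf
  rw [hint, norm_mul, Complex.norm_real, Complex.norm_real, norm_of_nonneg (sqrt_nonneg _),
    norm_of_nonneg (exp_nonneg _)]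

lemma integrable_exp_neg_sq_mul_cexp_prod {f : α → ℂ} (hf : Integrable f μ) {p : α → ℝ}
    (hp : Measurable p) :
    Integrable (fun z : ℝ × (α × α) ↦ (rexp (-z.1 ^ 2) : ℂ) *
      (f z.2.1 * (starRingEnd ℂ) (f z.2.2) *
        Complex.exp ((z.1 * (p z.2.1 - p z.2.2) : ℝ) * Complex.I)))
      (volume.prod (μ.prod μ)) := by
  have hgauss : Integrable fun c : ℝ ↦ (rexp (-c ^ 2) : ℂ) := by
    simpa using (integrable_exp_neg_mul_sq one_pos).ofReal (𝕜 := ℂ)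
  have hconj : Integrable (fun a ↦ (starRingEnd ℂ) (f a)) μ :=
    Complex.conjLIE.toContinuousLinearEquiv.toContinuousLinearMap.integrable_comp hf
  simp only [← mul_assoc]
  simp only [mul_assoc _ (f _)]
  refine (hgauss.mul_prod (hf.mul_prod hconj)).mul_bdd (c := 1) ?_ (.of_forall fun z ↦ ?_)
  · exact Measurable.aestronglyMeasurable (by fun_prop)
  · rw [Complex.norm_exp_ofReal_mul_I]

variable [SFinite μ]

lemma ofReal_norm_integral_mul_cexp_sq (f : α → ℂ) (p : α → ℝ) (c : ℝ) :
    ((‖∫ a, f a * Complex.exp ((c * p a : ℝ) * Complex.I) ∂μ‖ ^ 2 : ℝ) : ℂ)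
      = ∫ z, f z.1 * (starRingEnd ℂ) (f z.2) *
          Complex.exp ((c * (p z.1 - p z.2) : ℝ) * Complex.I) ∂μ.prod μ := by
  rw [Complex.ofReal_pow, ← Complex.mul_conj', ← integral_conj, ← integral_prod_mul]
  congr! 2
  rw [map_mul, ← Complex.exp_conj, mul_mul_mul_comm, ← Complex.exp_add]
  congr 2
  simp only [map_mul, Complex.conj_ofReal, Complex.conj_I]
  push_cast
  ring

/- `TT*` method: expand the square, apply Fubini, and evaluate the integral in `c` as the Fourier
transform of a Gaussian. -/
lemma integral_exp_neg_sq_mul_norm_integral_sq_le {f : α → ℂ} (hf : Integrable f μ) {p : α → ℝ}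
    (hp : Measurable p) :
    ∫ c, rexp (-c ^ 2) * ‖∫ a, f a * Complex.exp ((c * p a : ℝ) * Complex.I) ∂μ‖ ^ 2
      ≤ √π * ∫ z, ‖f z.1‖ * ‖f z.2‖ * rexp (-((p z.1 - p z.2) / 2) ^ 2) ∂μ.prod μ := by
  have hint := integrable_exp_neg_sq_mul_cexp_prod hf hp
  have hswap : ((∫ c, rexp (-c ^ 2) *
        ‖∫ a, f a * Complex.exp ((c * p a : ℝ) * Complex.I) ∂μ‖ ^ 2 : ℝ) : ℂ)
      = ∫ z, f z.1 * (starRingEnd ℂ) (f z.2) * (∫ c : ℝ, (rexp (-c ^ 2) : ℂ) *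
          Complex.exp ((c * (p z.1 - p z.2) : ℝ) * Complex.I)) ∂μ.prod μ := by
    rw [← integral_complex_ofReal]
    simp only [Complex.ofReal_mul (rexp _), ofReal_norm_integral_mul_cexp_sq,
      ← integral_const_mul]
    rw [integral_integral_swap hint]
    simp only [mul_left_comm]
  refine (le_abs_self _).trans ?_
  rw [← Real.norm_eq_abs, ← Complex.norm_real, hswap, ← integral_const_mul]
  refine (norm_integral_le_integral_norm _).trans_eq ?_
  simp only [norm_mul, RCLike.norm_conj, norm_integral_exp_neg_sq_mul_cexp]
  simp only [mul_left_comm (√π)]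

/- Schur's test with the weight `w`: by AM-GM, `1 ≤ (w b / w a + w a / w b) / 2`, and both terms
contribute the same by symmetry. -/
lemma integral_prod_le_mul_integral_inv {k : α → α → ℝ} {w : α → ℝ} {M : ℝ}
    (hk : ∀ a b, 0 ≤ k a b) (hsymm : ∀ a b, k a b = k b a) (hw : ∀ a, 0 < w a)
    (hwint : Integrable (fun a ↦ (w a)⁻¹) μ)
    (hkw : Integrable (fun z : α × α ↦ (w z.1)⁻¹ * (k z.1 z.2 * w z.2)) (μ.prod μ))
    (hM : ∀ a, ∫ b, k a b * w b ∂μ ≤ M) :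
    ∫ z, k z.1 z.2 ∂μ.prod μ ≤ M * ∫ a, (w a)⁻¹ ∂μ := by
  set g : α × α → ℝ := fun z ↦ (w z.1)⁻¹ * (k z.1 z.2 * w z.2)
  have hamgm (z : α × α) : k z.1 z.2 ≤ (g z + g z.swap) / 2 := by
    have h1 := hw z.1
    have h2 := hw z.2
    have hsq : (g z + g z.swap) / 2 - k z.1 z.2
        = k z.1 z.2 * (w z.1 - w z.2) ^ 2 / (2 * w z.1 * w z.2) := by
      simp only [g, Prod.fst_swap, Prod.snd_swap, hsymm z.2 z.1]
      field_simp
      ring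
    have := hk z.1 z.2
    have : 0 ≤ (g z + g z.swap) / 2 - k z.1 z.2 := hsq ▸ by positivity
    linarith
  calc ∫ z, k z.1 z.2 ∂μ.prod μ
    _ ≤ ∫ z, (g z + g z.swap) / 2 ∂μ.prod μ :=
      integral_mono_of_nonneg (.of_forall fun z ↦ hk _ _) ((hkw.add hkw.swap).div_const 2)
        (.of_forall hamgm)
    _ = ∫ z, g z ∂μ.prod μ := by
      have hswap : Integrable (fun z : α × α ↦ g z.swap) (μ.prod μ) := hkw.swap
      rw [integral_div, integral_add hkw hswap, integral_prod_swap]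
      ring
    _ = ∫ a, (w a)⁻¹ * ∫ b, k a b * w b ∂μ ∂μ := by
      simp only [integral_prod _ hkw, g, integral_const_mul]
    _ ≤ ∫ a, (w a)⁻¹ * M ∂μ := by
      have hint := hkw.integral_prod_left
      simp only [g, integral_const_mul] at hint
      refine integral_mono hint (hwint.mul_const M) fun a ↦ ?_
      have := hw a
      have := hM a
      dsimp only
      gcongr
    _ = M * ∫ a, (w a)⁻¹ ∂μ := by rw [integral_mul_const, mul_comm]

end GeneralBounds

section AngularIntegrals

open Real

lemma integral_abs_sin_two_mul_comp_cos_sq {φ : ℝ → ℝ} (hφ : Continuous φ) :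
    ∫ a in -π..π, |sin (2 * a)| * φ (cos a ^ 2) = 4 * ∫ u in 0..1, φ u := by
  have heven : Function.Even fun a ↦ |sin (2 * a)| * φ (cos a ^ 2) := fun a ↦ by
    simp only [mul_neg, sin_neg, abs_neg, cos_neg]
  have hper : Function.Periodic (fun a ↦ |sin (2 * a)| * φ (cos a ^ 2)) (2 * (π / 2)) := fun a ↦ by
    simp only [mul_div_cancel₀ π two_ne_zero, mul_add, sin_add_two_pi, cos_add_pi, neg_sq]
  have hfold := intervalIntegral_eq_two_mul_nsmul_of_even_of_periodic heven hper
    (fun _ _ ↦ Continuous.intervalIntegrable (by fun_prop) _ _) 2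
  have hderiv (a : ℝ) : HasDerivAt (fun a ↦ cos a ^ 2) (-sin (2 * a)) a := by
    refine ((hasDerivAt_cos a).pow 2).congr_deriv ?_
    rw [sin_two_mul]
    push_cast
    ring
  have hsubst : ∫ a in 0..π / 2, |sin (2 * a)| * φ (cos a ^ 2) = ∫ u in 0..1, φ u := by
    have h := intervalIntegral.integral_comp_mul_deriv (a := 0) (b := π / 2)
      (fun a _ ↦ hderiv a) (by fun_prop) hφ
    rw [cos_zero, cos_pi_div_two, one_pow, zero_pow two_ne_zero,
      intervalIntegral.integral_symm 0 1] at h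
    rw [← neg_eq_iff_eq_neg.mpr h, ← intervalIntegral.integral_neg]
    refine intervalIntegral.integral_congr fun a ha ↦ ?_
    rw [Set.uIcc_of_le (by positivity)] at ha
    have hsin : 0 ≤ sin (2 * a) :=
      sin_nonneg_of_nonneg_of_le_pi (by linarith [ha.1]) (by linarith [ha.2])
    simp only [abs_of_nonneg hsin, Function.comp_apply]
    ring
  rw [hsubst, Nat.cast_ofNat, mul_div_cancel₀ π two_ne_zero, nsmul_eq_mul] at hfold
  rw [hfold]
  norm_num

lemma integral_inv_abs_sin_two_mul_add_le {ε : ℝ} (hε : 0 < ε) :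
    ∫ a in -π..π, (|sin (2 * a)| + ε)⁻¹ ≤ 2 * π * log (1 + ε⁻¹) := by
  have hcont : Continuous fun a ↦ (|sin (2 * a)| + ε)⁻¹ :=
    Continuous.inv₀ (by fun_prop) fun a ↦ by positivity
  have heven : Function.Even fun a ↦ (|sin (2 * a)| + ε)⁻¹ := fun a ↦ by
    simp only [mul_neg, sin_neg, abs_neg]
  have hper : Function.Periodic (fun a ↦ (|sin (2 * a)| + ε)⁻¹) (2 * (π / 4)) := fun a ↦ by
    simp only [show 2 * (a + 2 * (π / 4)) = 2 * a + π by ring, sin_add_pi, abs_neg]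
  have hfold := intervalIntegral_eq_two_mul_nsmul_of_even_of_periodic heven hper
    (fun _ _ ↦ hcont.intervalIntegrable _ _) 4
  rw [Nat.cast_ofNat, mul_div_cancel₀ π four_ne_zero, nsmul_eq_mul] at hfold
  have hden {a : ℝ} (ha : a ∈ Set.Icc 0 (π / 4)) : 0 < 4 / π * a + ε := by
    have := ha.1
    positivity
  have hjordan {a : ℝ} (ha : a ∈ Set.Icc 0 (π / 4)) : 4 / π * a ≤ |sin (2 * a)| :=
    calc 4 / π * a = 2 / π * (2 * a) := by ring
      _ ≤ sin (2 * a) := mul_le_sin (by linarith [ha.1]) (by linarith [ha.2])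
      _ ≤ |sin (2 * a)| := le_abs_self _
  have hquarter : ∫ a in 0..π / 4, (|sin (2 * a)| + ε)⁻¹ ≤ π / 4 * log (1 + ε⁻¹) :=
    calc ∫ a in 0..π / 4, (|sin (2 * a)| + ε)⁻¹
      _ ≤ ∫ a in 0..π / 4, (4 / π * a + ε)⁻¹ := by
        refine intervalIntegral.integral_mono_on (by positivity) (hcont.intervalIntegrable _ _)
          (ContinuousOn.intervalIntegrable ?_) fun a ha ↦ ?_
        · rw [Set.uIcc_of_le (by positivity)]
          exact ContinuousOn.inv₀ (by fun_prop) fun a ha ↦ (hden ha).ne'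
        · exact inv_anti₀ (hden ha) (by gcongr; exact hjordan ha)
      _ = π / 4 * log (1 + ε⁻¹) := by
        have hend : 4 / π * (π / 4) = 1 := by field_simp
        rw [intervalIntegral.integral_comp_mul_add (·⁻¹) (by positivity), hend, mul_zero, zero_add,
          integral_inv_of_pos hε (by positivity), smul_eq_mul, inv_div, add_div, div_self hε.ne',
          one_div, add_comm ε⁻¹]
  rw [hfold]
  push_cast
  linarith

lemma integral_exp_neg_mul_sub_sq_le (T y : ℝ) :
    ∫ u in 0..1, rexp (-(T * (u - y) / 2) ^ 2) ≤ (1 + 2 * √π) / (1 + |T|) := by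
  set J := ∫ u in 0..1, rexp (-(T * (u - y) / 2) ^ 2)
  have hone : J ≤ 1 := by
    have h := intervalIntegral.norm_integral_le_of_norm_le_const (a := 0) (b := 1) (C := 1)
      (f := fun u ↦ rexp (-(T * (u - y) / 2) ^ 2)) fun u _ ↦ by
        rw [norm_of_nonneg (exp_nonneg _), exp_le_one_iff, neg_nonpos]
        positivity
    simpa using (le_abs_self J).trans h
  have hgauss : |T| * J ≤ 2 * √π := by
    rcases eq_or_ne T 0 with rfl | hT
    · simp
    have hb : 0 < T ^ 2 / 4 := by positivity
    have hform (u : ℝ) : rexp (-(T * (u - y) / 2) ^ 2) = rexp (-(T ^ 2 / 4) * (u - y) ^ 2) := by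
      ring_nf
    have hJ : J ≤ ∫ u, rexp (-(T ^ 2 / 4) * (u - y) ^ 2) := by
      simp only [J, hform, intervalIntegral.integral_of_le zero_le_one]
      exact setIntegral_le_integral ((integrable_exp_neg_mul_sq hb).comp_sub_right y)
        (.of_forall fun u ↦ exp_nonneg _)
    rw [integral_sub_right_eq_self (fun u ↦ rexp (-(T ^ 2 / 4) * u ^ 2)), integral_gaussian,
      sqrt_div pi_pos.le, sqrt_div (sq_nonneg T), sqrt_sq_eq_abs,
      show (4 : ℝ) = 2 ^ 2 by norm_num, sqrt_sq zero_le_two] at hJ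
    calc |T| * J ≤ |T| * (√π / (|T| / 2)) := by gcongr
      _ = 2 * √π := by field_simp
  rw [le_div_iff₀ (by positivity)]
  linarith

end AngularIntegrals

section CosSqOscillation

open Real

/-- Lebesgue measure on one period `(-π, π]` of the angular variables. -/
noncomputable abbrev angleMeasure : Measure ℝ := volume.restrict (Set.Ioc (-π) π)

/-- The weight for both Schur's test and the Cauchy–Schwarz inequality: the Jacobian `|sin (2 * a)|`
of the substitution `u = cos a ^ 2`, kept away from `0` at scale `(1 + |T|)⁻¹`. -/
noncomputable def sinWeight (T a : ℝ) : ℝ := |sin (2 * a)| + (1 + |T|)⁻¹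

/-- The kernel of the `TT*` operator for the phase `T * cos a ^ 2`, with Gaussian averaging over
the dual variable. -/
noncomputable def cosSqKernel (T a b : ℝ) : ℝ := rexp (-(T * (cos b ^ 2 - cos a ^ 2) / 2) ^ 2)

/-- The oscillatory integral with amplitude `f` and phase `c * T * cos a ^ 2` over one period. -/
noncomputable def cosSqOsc (f : ℝ → ℂ) (T c : ℝ) : ℂ :=
  ∫ a, f a * Complex.exp ((c * (T * cos a ^ 2) : ℝ) * Complex.I) ∂angleMeasure

lemma integral_angleMeasure {E : Type*} [NormedAddCommGroup E] [NormedSpace ℝ E] (g : ℝ → E) :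
    ∫ a, g a ∂angleMeasure = ∫ a in -π..π, g a :=
  (intervalIntegral.integral_of_le (neg_le_self pi_pos.le)).symm

lemma measureReal_angleMeasure_univ : angleMeasure.real Set.univ = 2 * π := by
  rw [measureReal_restrict_apply_univ, Real.volume_real_Ioc_of_le (neg_le_self pi_pos.le)]
  ring

@[fun_prop]
lemma continuous_sinWeight (T : ℝ) : Continuous (sinWeight T) := by
  unfold sinWeight
  fun_prop

lemma sinWeight_pos (T a : ℝ) : 0 < sinWeight T a := by
  unfold sinWeight
  positivity

lemma continuous_inv_sinWeight (T : ℝ) : Continuous fun a ↦ (sinWeight T a)⁻¹ :=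
  (continuous_sinWeight T).inv₀ fun a ↦ (sinWeight_pos T a).ne'

lemma integral_inv_sinWeight_le (T : ℝ) :
    ∫ a, (sinWeight T a)⁻¹ ∂angleMeasure ≤ 2 * π * log (2 + |T|) := by
  have h := integral_inv_abs_sin_two_mul_add_le (ε := (1 + |T|)⁻¹) (by positivity)
  rwa [inv_inv, ← add_assoc, one_add_one_eq_two, ← integral_angleMeasure] at h

lemma integral_comp_cos_sq_mul_sinWeight_le (T : ℝ) {φ : ℝ → ℝ} (hφ : Continuous φ) {B : ℝ}
    (hB : ∀ u, φ u ≤ B) :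
    ∫ a, φ (cos a ^ 2) * sinWeight T a ∂angleMeasure
      ≤ 4 * (∫ u in 0..1, φ u) + 2 * π * B / (1 + |T|) := by
  have hrest : ∫ a, φ (cos a ^ 2) ∂angleMeasure ≤ 2 * π * B := by
    rw [← measureReal_angleMeasure_univ, ← smul_eq_mul, ← integral_const]
    exact integral_mono (Continuous.integrableOn_Ioc (by fun_prop)) (integrable_const B)
      fun a ↦ hB _
  simp only [sinWeight, mul_add]
  rw [integral_add (Continuous.integrableOn_Ioc (by fun_prop))
    (Continuous.integrableOn_Ioc (by fun_prop)), integral_mul_const]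
  simp only [mul_comm (φ _)]
  rw [integral_angleMeasure fun a ↦ |sin (2 * a)| * _, integral_abs_sin_two_mul_comp_cos_sq hφ,
    div_eq_mul_inv]
  gcongr

lemma cosSqKernel_comm (T a b : ℝ) : cosSqKernel T a b = cosSqKernel T b a := by
  unfold cosSqKernel
  ring_nf

lemma integral_cosSqKernel_mul_sinWeight_le (T a : ℝ) :
    ∫ b, cosSqKernel T a b * sinWeight T b ∂angleMeasure
      ≤ (4 * (1 + 2 * √π) + 2 * π) / (1 + |T|) := by
  refine (integral_comp_cos_sq_mul_sinWeight_le T (B := 1)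
    (φ := fun u ↦ rexp (-(T * (u - cos a ^ 2) / 2) ^ 2)) (by fun_prop) fun u ↦ ?_).trans ?_
  · rw [exp_le_one_iff, neg_nonpos]
    positivity
  · rw [add_div, mul_one, mul_div_assoc 4]
    gcongr
    exact integral_exp_neg_mul_sub_sq_le T _

lemma integral_cosSqKernel_le (T : ℝ) :
    ∫ z, cosSqKernel T z.1 z.2 ∂angleMeasure.prod angleMeasure
      ≤ (4 * (1 + 2 * √π) + 2 * π) / (1 + |T|) * (2 * π * log (2 + |T|)) := by
  have hcont : Continuous fun z : ℝ × ℝ ↦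
      (sinWeight T z.1)⁻¹ * (cosSqKernel T z.1 z.2 * sinWeight T z.2) :=
    ((continuous_inv_sinWeight T).comp continuous_fst).mul (by unfold cosSqKernel; fun_prop)
  have hint : Integrable (fun z : ℝ × ℝ ↦
      (sinWeight T z.1)⁻¹ * (cosSqKernel T z.1 z.2 * sinWeight T z.2))
      (angleMeasure.prod angleMeasure) := by
    rw [Measure.prod_restrict]
    exact (hcont.continuousOn.integrableOn_compact (isCompact_Icc.prod isCompact_Icc)).mono_set
      (Set.prod_mono Set.Ioc_subset_Icc_self Set.Ioc_subset_Icc_self)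
  refine (integral_prod_le_mul_integral_inv (fun a b ↦ exp_nonneg _) (cosSqKernel_comm T)
    (sinWeight_pos T) (continuous_inv_sinWeight T).integrableOn_Ioc hint
    (integral_cosSqKernel_mul_sinWeight_le T)).trans ?_
  gcongr
  exact integral_inv_sinWeight_le T

lemma norm_cosSqOsc_le {f : ℝ → ℂ} (hf1 : ∀ a, ‖f a‖ ≤ 1) (T c : ℝ) : ‖cosSqOsc f T c‖ ≤ 2 * π := by
  refine (norm_integral_le_of_norm_le_const (C := 1) (.of_forall fun a ↦ ?_)).trans_eq ?_
  · rw [norm_mul, Complex.norm_exp_ofReal_mul_I, mul_one]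
    exact hf1 a
  · rw [measureReal_angleMeasure_univ, one_mul]

lemma continuous_cosSqOsc {f : ℝ → ℂ} (hf : Measurable f) (hf1 : ∀ a, ‖f a‖ ≤ 1) (T : ℝ) :
     Continuous (cosSqOsc f T) := by
  refine continuous_of_dominated (bound := fun _ ↦ 1) (fun c ↦ ?_) (fun c ↦ .of_forall fun a ↦ ?_)
    (integrable_const _) (.of_forall fun a ↦ by fun_prop)
  · exact Measurable.aestronglyMeasurable (by fun_prop)
  · rw [norm_mul, Complex.norm_exp_ofReal_mul_I, mul_one]
    exact hf1 a

lemma integral_exp_neg_sq_mul_norm_cosSqOsc_sq_le {f : ℝ → ℂ} (hf : Measurable f)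
    (hf1 : ∀ a, ‖f a‖ ≤ 1) (T : ℝ) :
    ∫ c, rexp (-c ^ 2) * ‖cosSqOsc f T c‖ ^ 2
      ≤ √π * ∫ z, cosSqKernel T z.1 z.2 ∂angleMeasure.prod angleMeasure := by
  have hint : Integrable f angleMeasure :=
    .of_bound hf.aestronglyMeasurable 1 (.of_forall hf1)
  refine (integral_exp_neg_sq_mul_norm_integral_sq_le hint (by fun_prop)).trans ?_
  refine mul_le_mul_of_nonneg_left (integral_mono_of_nonneg (.of_forall fun z ↦ by positivity)
    ?_ (.of_forall fun z ↦ ?_)) (sqrt_nonneg π)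
  · refine .of_bound (Continuous.aestronglyMeasurable ?_) 1 (.of_forall fun z ↦ ?_)
    · unfold cosSqKernel
      fun_prop
    · rw [cosSqKernel, norm_of_nonneg (exp_nonneg _), exp_le_one_iff, neg_nonpos]
      positivity
  · dsimp only
    rw [cosSqKernel_comm, cosSqKernel, mul_sub]
    exact mul_le_of_le_one_left (exp_nonneg _) (mul_le_one₀ (hf1 _) (norm_nonneg _) (hf1 _))

lemma integral_norm_cosSqOsc_sq_le {f : ℝ → ℂ} (hf : Measurable f)
    (hf1 : ∀ a, ‖f a‖ ≤ 1) (T : ℝ) :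
    ∫ c in 0..1, ‖cosSqOsc f T c‖ ^ 2
      ≤ rexp 1 * (√π * ∫ z, cosSqKernel T z.1 z.2 ∂angleMeasure.prod angleMeasure) := by
  have hcont := continuous_cosSqOsc hf hf1 T
  have hint : Integrable fun c ↦ rexp (-c ^ 2) * ‖cosSqOsc f T c‖ ^ 2 := by
    refine Integrable.mul_bdd (c := (2 * π) ^ 2)
      (by simpa using integrable_exp_neg_mul_sq one_pos)
      (Continuous.aestronglyMeasurable (by fun_prop)) (.of_forall fun c ↦ ?_)
    rw [norm_pow, norm_norm]
    gcongr
    exact norm_cosSqOsc_le hf1 T c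
  refine le_trans ?_ (mul_le_mul_of_nonneg_left
    (integral_exp_neg_sq_mul_norm_cosSqOsc_sq_le hf hf1 T) (exp_nonneg 1))
  rw [← integral_const_mul]
  refine le_trans ?_ (setIntegral_le_integral (s := Set.Ioc 0 1) (hint.const_mul _)
    (.of_forall fun c ↦ by positivity))
  rw [intervalIntegral.integral_of_le zero_le_one]
  refine setIntegral_mono_on (Continuous.integrableOn_Ioc (by fun_prop))
    (hint.const_mul _).integrableOn measurableSet_Ioc fun c hc ↦ ?_
  rw [← mul_assoc, ← exp_add]
  exact le_mul_of_one_le_left (by positivity) (one_le_exp (by nlinarith [hc.1, hc.2]))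

lemma half_le_log_two_add_abs (T : ℝ) : 1 / 2 ≤ log (2 + |T|) := by
  have : log 2 ≤ log (2 + |T|) := log_le_log two_pos (by linarith [abs_nonneg T])
  linarith [log_two_gt_d9]

lemma exists_integral_norm_cosSqOsc_sq_mul_sinWeight_le :
    ∃ C > 0, ∀ (T : ℝ) (f : ℝ → ℂ), Measurable f → (∀ a, ‖f a‖ ≤ 1) →
      ∫ b, ‖cosSqOsc f T (cos b ^ 2)‖ ^ 2 * sinWeight T b ∂angleMeasure
        ≤ C * log (2 + |T|) / (1 + |T|) := by
  set M : ℝ := 4 * (1 + 2 * √π) + 2 * π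
  refine ⟨4 * rexp 1 * √π * M * (2 * π) + 2 * (2 * π) ^ 3, by positivity, fun T f hf hf1 ↦ ?_⟩
  have hcont := continuous_cosSqOsc hf hf1 T
  have hlog := half_le_log_two_add_abs T
  calc ∫ b, ‖cosSqOsc f T (cos b ^ 2)‖ ^ 2 * sinWeight T b ∂angleMeasure
    _ ≤ 4 * (∫ c in 0..1, ‖cosSqOsc f T c‖ ^ 2) + 2 * π * (2 * π) ^ 2 / (1 + |T|) := by
      refine integral_comp_cos_sq_mul_sinWeight_le T
        (φ := fun c ↦ ‖cosSqOsc f T c‖ ^ 2) (by fun_prop) fun c ↦ ?_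
      gcongr
      exact norm_cosSqOsc_le hf1 T c
    _ ≤ 4 * (rexp 1 * (√π * (M / (1 + |T|) * (2 * π * log (2 + |T|)))))
          + 2 * π * (2 * π) ^ 2 * (2 * log (2 + |T|)) / (1 + |T|) := by
      gcongr 4 * ?_ + ?_ / _
      · refine (integral_norm_cosSqOsc_sq_le hf hf1 T).trans ?_
        gcongr
        exact integral_cosSqKernel_le T
      · exact le_mul_of_one_le_right (by positivity) (by linarith)
    _ = _ := by ring

lemma exists_integral_norm_cosSqOsc_le :
    ∃ C > 0, ∀ (T : ℝ) (f : ℝ → ℂ), Measurable f → (∀ a, ‖f a‖ ≤ 1) →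
      ∫ b, ‖cosSqOsc f T (cos b ^ 2)‖ ∂angleMeasure ≤ C * log (2 + |T|) / √(1 + |T|) := by
  obtain ⟨C, hC, hbound⟩ := exists_integral_norm_cosSqOsc_sq_mul_sinWeight_le
  refine ⟨2 * π + C, by positivity, fun T f hf hf1 ↦ ?_⟩
  have hcont := continuous_cosSqOsc hf hf1 T
  set s := √(1 + |T|)
  have hs : 0 < s := by positivity
  have hs2 : s ^ 2 = 1 + |T| := sq_sqrt (by positivity)
  have hamgm (b : ℝ) : ‖cosSqOsc f T (cos b ^ 2)‖
      ≤ s⁻¹ * (sinWeight T b)⁻¹ + s * (‖cosSqOsc f T (cos b ^ 2)‖ ^ 2 * sinWeight T b) := by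
    set v := ‖cosSqOsc f T (cos b ^ 2)‖
    have hw := sinWeight_pos T b
    have hsq : s⁻¹ * (sinWeight T b)⁻¹ + s * (v ^ 2 * sinWeight T b) - v
        = ((s * sinWeight T b * v - 1 / 2) ^ 2 + 3 / 4) / (s * sinWeight T b) := by
      field_simp
      ring
    have : 0 ≤ ((s * sinWeight T b * v - 1 / 2) ^ 2 + 3 / 4) / (s * sinWeight T b) := by positivity
    linarith
  have hint₁ : Integrable (fun b ↦ s⁻¹ * (sinWeight T b)⁻¹) angleMeasure :=
    ((continuous_inv_sinWeight T).const_mul _).integrableOn_Ioc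
  have hint₂ : Integrable (fun b ↦ s * (‖cosSqOsc f T (cos b ^ 2)‖ ^ 2 * sinWeight T b))
      angleMeasure := Continuous.integrableOn_Ioc (by fun_prop)
  calc ∫ b, ‖cosSqOsc f T (cos b ^ 2)‖ ∂angleMeasure
    _ ≤ s⁻¹ * ∫ b, (sinWeight T b)⁻¹ ∂angleMeasure
        + s * ∫ b, ‖cosSqOsc f T (cos b ^ 2)‖ ^ 2 * sinWeight T b ∂angleMeasure := by
      rw [← integral_const_mul, ← integral_const_mul, ← integral_add hint₁ hint₂]
      exact integral_mono (Continuous.integrableOn_Ioc (by fun_prop)) (hint₁.add hint₂) hamgm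
    _ ≤ s⁻¹ * (2 * π * log (2 + |T|)) + s * (C * log (2 + |T|) / s ^ 2) := by
      rw [hs2]
      gcongr
      · exact integral_inv_sinWeight_le T
      · exact hbound T f hf hf1
    _ = (2 * π + C) * log (2 + |T|) / s := by
      field_simp

end CosSqOscillation

section FundamentalSolution

open Real

/-- The phase factor of `G2 (-8) x t` at the frequency `(u, v)`, up to the constant factor
`Complex.exp (-16 * t * Complex.I)`. -/
noncomputable def latticePhase (x : ℤ × ℤ) (t u v : ℝ) : ℂ :=
  Complex.exp ((x.1 * u + x.2 * v + 4 * t * (cos u + cos v) ^ 2 : ℝ) * Complex.I)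

lemma continuous_latticePhase (x : ℤ × ℤ) (t : ℝ) : Continuous (latticePhase x t).uncurry := by
  unfold latticePhase
  fun_prop

lemma periodic_latticePhase_left (x : ℤ × ℤ) (t v : ℝ) :
    (latticePhase x t · v).Periodic (2 * π) := fun u ↦ by
  refine Complex.exp_eq_exp_iff_exists_int.mpr ⟨x.1, ?_⟩
  rw [cos_add_two_pi]
  push_cast
  ring

lemma periodic_latticePhase_right (x : ℤ × ℤ) (t u : ℝ) :
    (latticePhase x t u).Periodic (2 * π) := fun v ↦ by
  refine Complex.exp_eq_exp_iff_exists_int.mpr ⟨x.2, ?_⟩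
  rw [cos_add_two_pi]
  push_cast
  ring

lemma latticePhase_add_sub (x : ℤ × ℤ) (t a b : ℝ) :
    latticePhase x t (a + b) (a - b)
      = Complex.exp (((x.1 + x.2) * a : ℝ) * Complex.I)
        * (Complex.exp (((x.1 - x.2) * b : ℝ) * Complex.I)
          * Complex.exp ((cos a ^ 2 * (16 * t * cos b ^ 2) : ℝ) * Complex.I)) := by
  rw [latticePhase, ← Complex.exp_add, ← Complex.exp_add, cos_add, cos_sub]
  push_cast
  ring_nf

lemma om_pow_four_sub_eight_mul_om_sq (ξ : ℝ × ℝ) :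
    om ξ ^ 4 + (-8) * om ξ ^ 2 = 4 * (cos ξ.1 + cos ξ.2) ^ 2 - 16 := by
  have hsq : om ξ ^ 2 = (2 - 2 * cos ξ.1) + (2 - 2 * cos ξ.2) :=
    sq_sqrt (by linarith [cos_le_one ξ.1, cos_le_one ξ.2])
  rw [show om ξ ^ 4 = (om ξ ^ 2) ^ 2 by ring, hsq]
  ring

lemma norm_G2_neg_eight (x : ℤ × ℤ) (t : ℝ) :
    ‖G2 (-8) x t‖ = ((2 * π) ^ 2)⁻¹ * ‖∫ u in -π..π, ∫ v in -π..π, latticePhase x t u v‖ := by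
  have hphase (ξ : ℝ × ℝ) : Complex.exp (Complex.I *
        (((x.1 : ℝ) * ξ.1 + (x.2 : ℝ) * ξ.2 + (om ξ ^ 4 + (-8) * om ξ ^ 2) * t : ℝ) : ℂ))
      = Complex.exp ((-16 * t : ℝ) * Complex.I) * latticePhase x t ξ.1 ξ.2 := by
    rw [om_pow_four_sub_eight_mul_om_sq, latticePhase, ← Complex.exp_add]
    push_cast
    ring_nf
  have hle : -π ≤ π := neg_le_self pi_pos.le
  rw [G2]
  simp only [hphase]
  rw [integral_const_mul, norm_mul, norm_mul, Complex.norm_exp_ofReal_mul_I, one_mul,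
    Complex.norm_real, norm_of_nonneg (by positivity), Measure.volume_eq_prod,
    setIntegral_prod (fun ξ : ℝ × ℝ ↦ latticePhase x t ξ.1 ξ.2)
      ((continuous_latticePhase x t).continuousOn.integrableOn_compact
        (isCompact_Icc.prod isCompact_Icc))]
  simp only [intervalIntegral.integral_of_le hle, integral_Icc_eq_integral_Ioc]

lemma norm_G2_neg_eight_le (x : ℤ × ℤ) (t : ℝ) :
    ‖G2 (-8) x t‖ ≤ ((2 * π) ^ 2)⁻¹ *
      ∫ a, ‖cosSqOsc (fun b ↦ Complex.exp (((x.1 - x.2) * b : ℝ) * Complex.I)) (16 * t)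
        (cos a ^ 2)‖ ∂angleMeasure := by
  have hrotate := intervalIntegral_comp_add_sub_of_periodic (continuous_latticePhase x t)
    (periodic_latticePhase_left x t) (periodic_latticePhase_right x t) (-π)
  rw [show -π + 2 * π = π by ring] at hrotate
  rw [norm_G2_neg_eight, ← hrotate]
  gcongr
  simp only [latticePhase_add_sub, ← integral_angleMeasure, integral_const_mul]
  refine (norm_integral_le_integral_norm _).trans_eq ?_
  simp only [norm_mul, Complex.norm_exp_ofReal_mul_I, one_mul, cosSqOsc]

lemma log_two_add_abs_sixteen_mul_le (t : ℝ) : log (2 + |16 * t|) ≤ 5 * log (2 + |t|) := by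
  have h2 : 2 ≤ 2 + |t| := by linarith [abs_nonneg t]
  calc log (2 + |16 * t|) ≤ log ((2 + |t|) ^ 5) := by
        refine log_le_log (by positivity) ?_
        have : 2 ^ 4 ≤ (2 + |t|) ^ 4 := by gcongr
        rw [abs_mul, abs_of_pos (by norm_num), pow_succ]
        nlinarith [abs_nonneg t]
    _ = 5 * log (2 + |t|) := by rw [log_pow, Nat.cast_ofNat]

lemma log_div_sqrt_abs_sixteen_mul_le (t : ℝ) :
    log (2 + |16 * t|) / √(1 + |16 * t|)
      ≤ 5 * ((1 + |t|) ^ (-(1 / 2 : ℝ)) * log (2 + |t|)) := by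
  have hlog : 0 ≤ log (2 + |t|) := one_half_pos.le.trans (half_le_log_two_add_abs t)
  have habs : |t| ≤ |16 * t| := by
    rw [abs_mul, abs_of_pos (by norm_num : (0 : ℝ) < 16)]
    linarith [abs_nonneg t]
  calc log (2 + |16 * t|) / √(1 + |16 * t|)
    _ ≤ 5 * log (2 + |t|) / √(1 + |t|) := by
      gcongr
      exact log_two_add_abs_sixteen_mul_le t
    _ = 5 * ((1 + |t|) ^ (-(1 / 2 : ℝ)) * log (2 + |t|)) := by
      rw [rpow_neg (by positivity), ← sqrt_eq_rpow]
      ring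

end FundamentalSolution

/-- For `γ = −8` the fundamental solution on `ℤ²` decays like `(1+|t|)^{-1/2} log(2+|t|)`. -/
theorem stmt2 :
    ∃ C > (0 : ℝ), ∀ (x : ℤ × ℤ) (t : ℝ),
      ‖G2 (-8) x t‖ ≤ C * (1 + |t|) ^ (-(1 / 2 : ℝ)) * Real.log (2 + |t|) := by
  obtain ⟨C, hC, hosc⟩ := exists_integral_norm_cosSqOsc_le
  refine ⟨((2 * Real.pi) ^ 2)⁻¹ * C * 5, by positivity, fun x t ↦ ?_⟩
  set f : ℝ → ℂ := fun b ↦ Complex.exp (((x.1 - x.2) * b : ℝ) * Complex.I)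
  have hf : Measurable f := by fun_prop
  calc ‖G2 (-8) x t‖
    _ ≤ ((2 * Real.pi) ^ 2)⁻¹ *
          ∫ a, ‖cosSqOsc f (16 * t) (Real.cos a ^ 2)‖ ∂angleMeasure :=
      norm_G2_neg_eight_le x t
    _ ≤ ((2 * Real.pi) ^ 2)⁻¹ * (C * Real.log (2 + |16 * t|) / √(1 + |16 * t|)) := by
      gcongr
      exact hosc _ f hf fun b ↦ (Complex.norm_exp_ofReal_mul_I _).le
    _ ≤ ((2 * Real.pi) ^ 2)⁻¹ *
          (C * (5 * ((1 + |t|) ^ (-(1 / 2 : ℝ)) * Real.log (2 + |t|)))) := by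
      rw [mul_div_assoc C]
      gcongr
      exact log_div_sqrt_abs_sixteen_mul_le t
    _ = _ := by ring
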